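/- Let q be a (sufficiently smooth) solution of the barotropic vorticity equation q_t + J(ψ,q) + βψ_x = f + νΔq − rq, q = Δψ, with boundary conditions q = 0, ψ = 0 on ∂D. Then the enstrophy ‖q(t)‖² satisfies the differential inequality d/dt ‖q(t)‖² ≤ −2α ‖q(t)‖² + (1/r) ‖f(t)‖² for all t ≥ 0, where α = r/2 + πν/|D| − (|β|/2)(|D|/π + 1). -/

import Mathlib

open MeasureTheory Real Filter Topology

/-- Partial derivative in the `x` direction. -/
noncomputable def pdx (u : ℝ × ℝ → ℝ) (p : ℝ × ℝ) : ℝ := fderiv ℝ u p (1, 0)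

/-- Partial derivative in the `y` direction. -/
noncomputable def pdy (u : ℝ × ℝ → ℝ) (p : ℝ × ℝ) : ℝ := fderiv ℝ u p (0, 1)

/-- The Jacobian operator `J(u,v) = u_x v_y - u_y v_x`. -/
noncomputable def jac (u v : ℝ × ℝ → ℝ) (p : ℝ × ℝ) : ℝ :=
  pdx u p * pdy v p - pdy u p * pdx v p

/-- The Laplacian `Δu = u_xx + u_yy`. -/
noncomputable def lap (u : ℝ × ℝ → ℝ) (p : ℝ × ℝ) : ℝ :=
  pdx (pdx u) p + pdy (pdy u) p

/-- The squared `L²(D)` norm `‖u‖² = ∫_D u² dxdy`. -/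
noncomputable def l2sq (D : Set (ℝ × ℝ)) (u : ℝ × ℝ → ℝ) : ℝ :=
  ∫ p in D, (u p) ^ 2

/-- The `L²(D)` norm. -/
noncomputable def l2norm (D : Set (ℝ × ℝ)) (u : ℝ × ℝ → ℝ) : ℝ :=
  Real.sqrt (l2sq D u)

/-- The squared `L²(D)` norm of the gradient, `‖∇u‖² = ∫_D |∇u|² dxdy`. -/
noncomputable def gradsq (D : Set (ℝ × ℝ)) (u : ℝ × ℝ → ℝ) : ℝ :=
  ∫ p in D, ((pdx u p) ^ 2 + (pdy u p) ^ 2)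

/-- The `L²(D)` norm of the gradient. -/
noncomputable def gradNorm (D : Set (ℝ × ℝ)) (u : ℝ × ℝ → ℝ) : ℝ :=
  Real.sqrt (gradsq D u)

/-- The area `|D|` of the domain. -/
noncomputable def area (D : Set (ℝ × ℝ)) : ℝ := (volume D).toReal

/-- The constant `α = r/2 + πν/|D| - (|β|/2)(|D|/π + 1)`. -/
noncomputable def alphaConst (D : Set (ℝ × ℝ)) (β ν r : ℝ) : ℝ :=
  r / 2 + π * ν / area D - |β| / 2 * (area D / π + 1)

/-- A space-time field that is smooth jointly in time and space. -/
def SmoothField (u : ℝ → ℝ × ℝ → ℝ) : Prop :=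
  ContDiff ℝ (⊤ : ℕ∞) (Function.uncurry u)

/-- A space-time field that is mean-square integrable in space and time
(on the time interval `[0,∞)` and the spatial domain `D`). -/
def MeanSquareIntegrable (D : Set (ℝ × ℝ)) (f : ℝ → ℝ × ℝ → ℝ) : Prop :=
  (∀ t, 0 ≤ t → Integrable (fun p => (f t p) ^ 2) (volume.restrict D)) ∧
  (∀ T, 0 < T → IntervalIntegrable (fun t => l2sq D (f t)) volume 0 T)

/-- `SolvesBVE D β ν r q ψ f g` says that the vorticity `q`, with streamfunction `ψ`,
solves the barotropic vorticity equation
`q_t + J(ψ,q) + β ψ_x = f + ν Δq - r q + g` on the domain `D` for all times `t ≥ 0`,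
with the relation `q = Δψ` and zero boundary conditions `q = 0`, `ψ = 0` on `∂D`.
The extra field `g` is an additional forcing term (e.g. a subgrid-scale stress,
a stochastic parameterization, or `0`). -/
def SolvesBVE (D : Set (ℝ × ℝ)) (β ν r : ℝ) (q ψ f g : ℝ → ℝ × ℝ → ℝ) : Prop :=
  (∀ t, 0 ≤ t → ∀ p ∈ D, q t p = lap (ψ t) p) ∧
  (∀ t, 0 ≤ t → ∀ p ∈ frontier D, q t p = 0 ∧ ψ t p = 0) ∧
  (∀ t, 0 ≤ t → ∀ p ∈ D,
    deriv (fun s => q s p) t + jac (ψ t) (q t) p + β * pdx (ψ t) p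
      = f t p + ν * lap (q t) p - r * q t p + g t p)

/-- At a countable set of points at most, a function vanishes while its derivative does not. -/
lemma countable_zero_of_deriv_ne_zero {g g' : ℝ → ℝ} (hg : ∀ x, HasDerivAt g (g' x) x) :
    {x | g x = 0 ∧ g' x ≠ 0}.Countable := by
  have h := countable_setOfPred_isolated_right_within (s := {x | g x = 0})
  refine h.mono ?_
  rintro x ⟨hx0, hx1⟩
  refine ⟨hx0, ?_⟩
  rw [← empty_mem_iff_bot, mem_nhdsWithin_iff_eventually]
  have h1 := (hg x).eventually_ne (c := 0) hx1
  rw [eventually_nhdsWithin_iff] at h1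
  filter_upwards [h1] with y hy hy'
  exact hy (ne_of_gt hy'.2) hy'.1

/-- The fundamental theorem of calculus for the extension by zero of a `C¹` function that
vanishes on the frontier of an open set. -/
lemma integral_indicator_deriv {U : Set ℝ} (hU : IsOpen U) {g g' : ℝ → ℝ}
    (hg : ∀ x, HasDerivAt g (g' x) x) (hg' : Continuous g') (h0 : ∀ x ∈ frontier U, g x = 0)
    (a b : ℝ) :
    ∫ x in a..b, U.indicator g' x = U.indicator g b - U.indicator g a := by
  have hgc : Continuous g := continuous_iff_continuousAt.2 fun x => (hg x).continuousAt
  refine integral_eq_of_hasDerivAt_off_countable _ _ (countable_zero_of_deriv_ne_zero hg)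
    (continuous_indicator h0 hgc.continuousOn).continuousOn ?_ ?_
  · rintro x ⟨-, hx⟩
    by_cases hxU : x ∈ U
    · rw [Set.indicator_of_mem hxU]
      refine (hg x).congr_of_eventuallyEq ?_
      filter_upwards [hU.mem_nhds hxU] with y hy using Set.indicator_of_mem hy g
    rw [Set.indicator_of_notMem hxU]
    by_cases hxc : x ∈ closure U
    · have hx0 : g x = 0 := h0 x ⟨hxc, fun h => hxU (interior_subset h)⟩
      have hx1 : g' x = 0 := by
        by_contra h
        exact hx ⟨hx0, h⟩
      have hd := hg x
      rw [hx1, hasDerivAt_iff_isLittleO] at hd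
      rw [hasDerivAt_iff_isLittleO]
      refine Asymptotics.IsBigO.trans_isLittleO (Asymptotics.IsBigO.of_bound 1 ?_) hd
      refine Eventually.of_forall fun y => ?_
      rw [Set.indicator_of_notMem hxU, hx0]
      by_cases hy : y ∈ U <;> simp [hy]
    · refine (hasDerivAt_const x (0 : ℝ)).congr_of_eventuallyEq ?_
      filter_upwards [isClosed_closure.isOpen_compl.mem_nhds hxc] with y hy
      exact Set.indicator_of_notMem (fun h => hy (subset_closure h)) g
  · rw [intervalIntegrable_iff]
    exact (hg'.intervalIntegrable a b).def'.indicator hU.measurableSet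

lemma integral_indicator_deriv_eq_zero {U : Set ℝ} (hU : IsOpen U)
    (hUb : Bornology.IsBounded U) {g g' : ℝ → ℝ}
    (hg : ∀ x, HasDerivAt g (g' x) x) (hg' : Continuous g')
    (h0 : ∀ x ∈ frontier U, g x = 0) :
    ∫ x, U.indicator g' x = 0 := by
  obtain ⟨R, hR⟩ := hUb.subset_ball 0
  rw [Real.ball_eq_Ioo, zero_sub, zero_add] at hR
  have hs : Function.support (U.indicator g') ⊆ Set.Ioc (-R) R :=
    Set.support_indicator_subset.trans (hR.trans Set.Ioo_subset_Ioc_self)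
  rw [← intervalIntegral.integral_eq_integral_of_support_subset hs,
    integral_indicator_deriv hU hg hg' h0,
    Set.indicator_of_notMem (fun h => lt_irrefl R (hR h).2),
    Set.indicator_of_notMem (fun h => lt_irrefl (-R) (hR h).1), sub_zero]

lemma two_mul_abs_indicator_le {U : Set ℝ} (hU : IsOpen U)
    (hUb : Bornology.IsBounded U) {g g' : ℝ → ℝ}
    (hg : ∀ x, HasDerivAt g (g' x) x) (hg' : Continuous g')
    (h0 : ∀ x ∈ frontier U, g x = 0) (x : ℝ) :
    2 * |U.indicator g x| ≤ ∫ s, |U.indicator g' s| := by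
  by_cases hx : x ∈ U
  swap
  · rw [Set.indicator_of_notMem hx, abs_zero, mul_zero]
    exact integral_nonneg fun s => abs_nonneg _
  obtain ⟨R, hR⟩ := hUb.subset_ball 0
  rw [Real.ball_eq_Ioo, zero_sub, zero_add] at hR
  have hs : Function.support (fun s => |U.indicator g' s|) ⊆ Set.Ioc (-R) R := by
    intro s hs
    refine Set.Ioo_subset_Ioc_self (hR ?_)
    by_contra h
    simp [h] at hs
  have hi : ∀ a b, IntervalIntegrable (fun s => |U.indicator g' s|) volume a b := by
    intro a b
    rw [intervalIntegrable_iff]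
    exact ((hg'.intervalIntegrable a b).def'.indicator hU.measurableSet).abs
  have h1 := integral_indicator_deriv hU hg hg' h0 (-R) x
  have h2 := integral_indicator_deriv hU hg hg' h0 x R
  rw [Set.indicator_of_notMem (s := U) (a := -R) (fun h => lt_irrefl (-R) (hR h).1)] at h1
  rw [Set.indicator_of_notMem (s := U) (a := R) (fun h => lt_irrefl R (hR h).2)] at h2
  have h3 := intervalIntegral.abs_integral_le_integral_abs (f := U.indicator g')
    (μ := volume) (hR hx).1.le
  have h4 := intervalIntegral.abs_integral_le_integral_abs (f := U.indicator g')
    (μ := volume) (hR hx).2.le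
  rw [h1, sub_zero] at h3
  rw [h2, zero_sub, abs_neg] at h4
  rw [← intervalIntegral.integral_eq_integral_of_support_subset hs,
    ← intervalIntegral.integral_add_adjacent_intervals (hi _ x) (hi x _)]
  linarith

lemma hasDerivAt_pdx {u : ℝ × ℝ → ℝ} (hu : Differentiable ℝ u) (x y : ℝ) :
    HasDerivAt (fun s => u (s, y)) (pdx u (x, y)) x :=
  (hu (x, y)).hasFDerivAt.comp_hasDerivAt x ((hasDerivAt_id x).prodMk (hasDerivAt_const x y))

lemma hasDerivAt_pdy {u : ℝ × ℝ → ℝ} (hu : Differentiable ℝ u) (x y : ℝ) :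
    HasDerivAt (fun s => u (x, s)) (pdy u (x, y)) y :=
  (hu (x, y)).hasFDerivAt.comp_hasDerivAt y ((hasDerivAt_const y x).prodMk (hasDerivAt_id y))

lemma continuous_pdx {u : ℝ × ℝ → ℝ} (hu : ContDiff ℝ 1 u) : Continuous (pdx u) :=
  (hu.continuous_fderiv one_ne_zero).clm_apply continuous_const

lemma continuous_pdy {u : ℝ × ℝ → ℝ} (hu : ContDiff ℝ 1 u) : Continuous (pdy u) :=
  (hu.continuous_fderiv one_ne_zero).clm_apply continuous_const

lemma contDiff_pdx {u : ℝ × ℝ → ℝ} (hu : ContDiff ℝ (⊤ : ℕ∞) u) :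
    ContDiff ℝ (⊤ : ℕ∞) (pdx u) :=
  (hu.fderiv_right (by simp)).clm_apply contDiff_const

lemma contDiff_pdy {u : ℝ × ℝ → ℝ} (hu : ContDiff ℝ (⊤ : ℕ∞) u) :
    ContDiff ℝ (⊤ : ℕ∞) (pdy u) :=
  (hu.fderiv_right (by simp)).clm_apply contDiff_const

lemma pdx_mul {u v : ℝ × ℝ → ℝ} (hu : Differentiable ℝ u) (hv : Differentiable ℝ v)
    (p : ℝ × ℝ) : pdx (u * v) p = u p * pdx v p + v p * pdx u p := by
  simp [pdx, fderiv_mul (hu p) (hv p)]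

lemma pdy_mul {u v : ℝ × ℝ → ℝ} (hu : Differentiable ℝ u) (hv : Differentiable ℝ v)
    (p : ℝ × ℝ) : pdy (u * v) p = u p * pdy v p + v p * pdy u p := by
  simp [pdy, fderiv_mul (hu p) (hv p)]

lemma pdx_pdy_comm {u : ℝ × ℝ → ℝ} (hu : ContDiff ℝ (⊤ : ℕ∞) u) (p : ℝ × ℝ) :
    pdx (pdy u) p = pdy (pdx u) p := by
  have h2 : Differentiable ℝ (fderiv ℝ u) :=
    (hu.fderiv_right (m := (⊤ : ℕ∞)) (by simp)).differentiable (by simp)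
  have hs : IsSymmSndFDerivAt ℝ u p :=
    (contDiff_infty.1 hu 2).contDiffAt.isSymmSndFDerivAt
      (by rw [minSmoothness_of_isRCLikeNormedField]; rfl)
  have key : ∀ v w : ℝ × ℝ, fderiv ℝ (fun z => fderiv ℝ u z v) p w
      = fderiv ℝ (fderiv ℝ u) p w v := by
    intro v w
    rw [fderiv_clm_apply (h2 p) (differentiableAt_const v)]
    simp
  exact (key _ _).trans ((hs _ _).trans (key _ _).symm)

section Domain

variable {D : Set (ℝ × ℝ)}

lemma isBounded_slice_fst (hDb : Bornology.IsBounded D) (y : ℝ) :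
    Bornology.IsBounded ((fun x => (x, y)) ⁻¹' D) :=
  hDb.image_fst.subset fun x hx => ⟨(x, y), hx, rfl⟩

lemma isBounded_slice_snd (hDb : Bornology.IsBounded D) (x : ℝ) :
    Bornology.IsBounded ((fun y => (x, y)) ⁻¹' D) :=
  hDb.image_snd.subset fun y hy => ⟨(x, y), hy, rfl⟩

lemma integrableOn_of_continuous (hDb : Bornology.IsBounded D) {g : ℝ × ℝ → ℝ}
    (hg : Continuous g) : IntegrableOn g D :=
  (hg.continuousOn.integrableOn_compact hDb.isCompact_closure).mono_set subset_closure

lemma integrable_indicator_of_continuous (hD : IsOpen D) (hDb : Bornology.IsBounded D)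
    {g : ℝ × ℝ → ℝ} (hg : Continuous g) : Integrable (D.indicator g) :=
  (integrableOn_of_continuous hDb hg).integrable_indicator hD.measurableSet

lemma setIntegral_pdx_eq_zero (hD : IsOpen D) (hDb : Bornology.IsBounded D)
    {F : ℝ × ℝ → ℝ} (hF : ContDiff ℝ 1 F) (h0 : ∀ p ∈ frontier D, F p = 0) :
    ∫ p in D, pdx F p = 0 := by
  have hc := continuous_pdx hF
  have hi := integrable_indicator_of_continuous hD hDb hc
  rw [← integral_indicator hD.measurableSet, Measure.volume_eq_prod, integral_prod_symm _ hi]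
  refine integral_eq_zero_of_ae (Eventually.of_forall fun y => ?_)
  have hy : Continuous fun x : ℝ => (x, y) := by fun_prop
  exact integral_indicator_deriv_eq_zero (hD.preimage hy) (isBounded_slice_fst hDb y)
    (fun x => hasDerivAt_pdx (hF.differentiable one_ne_zero) x y) (hc.comp hy)
    fun x hx => h0 _ (hy.frontier_preimage_subset D hx)

lemma setIntegral_pdy_eq_zero (hD : IsOpen D) (hDb : Bornology.IsBounded D)
    {F : ℝ × ℝ → ℝ} (hF : ContDiff ℝ 1 F) (h0 : ∀ p ∈ frontier D, F p = 0) :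
    ∫ p in D, pdy F p = 0 := by
  have hc := continuous_pdy hF
  have hi := integrable_indicator_of_continuous hD hDb hc
  rw [← integral_indicator hD.measurableSet, Measure.volume_eq_prod, integral_prod _ hi]
  refine integral_eq_zero_of_ae (Eventually.of_forall fun x => ?_)
  have hx : Continuous fun y : ℝ => (x, y) := by fun_prop
  exact integral_indicator_deriv_eq_zero (hD.preimage hx) (isBounded_slice_snd hDb x)
    (fun y => hasDerivAt_pdy (hF.differentiable one_ne_zero) x y) (hc.comp hx)
    fun y hy => h0 _ (hx.frontier_preimage_subset D hy)

/-- Green's first identity. -/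
lemma setIntegral_mul_lap (hD : IsOpen D) (hDb : Bornology.IsBounded D)
    {u v : ℝ × ℝ → ℝ} (hu : ContDiff ℝ (⊤ : ℕ∞) u) (hv : ContDiff ℝ (⊤ : ℕ∞) v)
    (h0 : ∀ p ∈ frontier D, u p = 0) :
    ∫ p in D, u p * lap v p = -∫ p in D, (pdx u p * pdx v p + pdy u p * pdy v p) := by
  have hx := setIntegral_pdx_eq_zero hD hDb (F := u * pdx v)
    ((hu.mul (contDiff_pdx hv)).of_le (by simp)) fun p hp => by simp [h0 p hp]
  have hy := setIntegral_pdy_eq_zero hD hDb (F := u * pdy v)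
    ((hu.mul (contDiff_pdy hv)).of_le (by simp)) fun p hp => by simp [h0 p hp]
  have hcx := (contDiff_pdx hu).continuous
  have hcy := (contDiff_pdy hu).continuous
  have hvx := (contDiff_pdx hv).continuous
  have hvy := (contDiff_pdy hv).continuous
  have hvxx := (contDiff_pdx (contDiff_pdx hv)).continuous
  have hvyy := (contDiff_pdy (contDiff_pdy hv)).continuous
  have huc := hu.continuous
  have hl : Continuous (lap v) := hvxx.add hvyy
  have hud : Differentiable ℝ u := hu.differentiable (by simp)
  have hcFx := continuous_pdx (u := u * pdx v) ((hu.mul (contDiff_pdx hv)).of_le (by simp))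
  have hcFy := continuous_pdy (u := u * pdy v) ((hu.mul (contDiff_pdy hv)).of_le (by simp))
  rw [eq_neg_iff_add_eq_zero, ← integral_add (integrableOn_of_continuous hDb (by fun_prop))
    (integrableOn_of_continuous hDb (by fun_prop)), ← add_zero (0 : ℝ)]
  nth_rw 2 [← hx]
  rw [← hy, ← integral_add (integrableOn_of_continuous hDb hcFy)
    (integrableOn_of_continuous hDb hcFx)]
  refine integral_congr_ae (Eventually.of_forall fun p => ?_)
  simp only [pdx_mul hud ((contDiff_pdx hv).differentiable (by simp)),
    pdy_mul hud ((contDiff_pdy hv).differentiable (by simp)), lap]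
  ring

/-- Advection does no work on the advected field. -/
lemma setIntegral_mul_jac_eq_zero (hD : IsOpen D) (hDb : Bornology.IsBounded D)
    {u v : ℝ × ℝ → ℝ} (hu : ContDiff ℝ (⊤ : ℕ∞) u) (hv : ContDiff ℝ (⊤ : ℕ∞) v)
    (h0 : ∀ p ∈ frontier D, u p = 0) :
    ∫ p in D, u p * jac v u p = 0 := by
  have hFx : ContDiff ℝ 1 (u * u * pdy v) :=
    ((hu.mul hu).mul (contDiff_pdy hv)).of_le (by simp)
  have hFy : ContDiff ℝ 1 (u * u * pdx v) :=
    ((hu.mul hu).mul (contDiff_pdx hv)).of_le (by simp)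
  have hx := setIntegral_pdx_eq_zero hD hDb hFx fun p hp => by simp [h0 p hp]
  have hy := setIntegral_pdy_eq_zero hD hDb hFy fun p hp => by simp [h0 p hp]
  have hud : Differentiable ℝ u := hu.differentiable (by simp)
  have hsub := integral_sub (integrableOn_of_continuous hDb (continuous_pdy hFy))
    (integrableOn_of_continuous hDb (continuous_pdx hFx))
  have hJ : ∀ p, pdy (u * u * pdx v) p - pdx (u * u * pdy v) p = 2 * (u p * jac v u p) := by
    intro p
    rw [pdx_mul (hud.mul hud) ((contDiff_pdy hv).differentiable (by simp)),
      pdy_mul (hud.mul hud) ((contDiff_pdx hv).differentiable (by simp)),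
      pdx_mul hud hud, pdy_mul hud hud, pdx_pdy_comm hv, Pi.mul_apply, jac]
    ring
  simp only [hJ] at hsub
  rw [hx, hy, sub_zero, integral_const_mul] at hsub
  linarith

lemma sq_setIntegral_abs_le (hDb : Bornology.IsBounded D) {g : ℝ × ℝ → ℝ} (hg : Continuous g) :
    (∫ p in D, |g p|) ^ 2 ≤ area D * ∫ p in D, g p ^ 2 := by
  have hfin : volume D ≠ ⊤ := hDb.measure_lt_top.ne
  have h1 := integrableOn_of_continuous hDb hg.abs
  have h2 : IntegrableOn (fun p => g p ^ 2) D := integrableOn_of_continuous hDb (hg.pow 2)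
  set S := ∫ p in D, |g p|
  have key : ∀ m : ℝ, 0 ≤ (∫ p in D, g p ^ 2) - 2 * m * S + m ^ 2 * area D := by
    intro m
    have h3 : IntegrableOn (fun p => 2 * m * |g p|) D := h1.const_mul _
    have h4 : IntegrableOn (fun p => g p ^ 2 - 2 * m * |g p|) D := h2.sub h3
    have hc : IntegrableOn (fun _ : ℝ × ℝ => m ^ 2) D := integrableOn_const hfin
    have h : ∫ p in D, (|g p| - m) ^ 2 = (∫ p in D, g p ^ 2) - 2 * m * S + m ^ 2 * area D := by
      have e : ∀ p, (|g p| - m) ^ 2 = g p ^ 2 - 2 * m * |g p| + m ^ 2 := by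
        intro p
        rw [sub_sq, sq_abs]
        ring
      simp only [e]
      rw [integral_add h4 hc, integral_sub h2 h3,
        integral_const_mul, setIntegral_const, smul_eq_mul, mul_comm (m ^ 2)]
      rfl
    rw [← h]
    exact integral_nonneg fun p => sq_nonneg _
  have hA : 0 ≤ area D := ENNReal.toReal_nonneg
  rcases hA.eq_or_lt with hA | hA
  · have h0 : volume D = 0 := by
      rcases (ENNReal.toReal_eq_zero_iff _).1 hA.symm with h | h
      exacts [h, absurd h hfin]
    have : S = 0 := by simp [S, Measure.restrict_eq_zero.2 h0]
    simp [this, ← hA]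
  · have h := key (S / area D)
    have e : (∫ p in D, g p ^ 2) - 2 * (S / area D) * S + (S / area D) ^ 2 * area D
        = (area D * (∫ p in D, g p ^ 2) - S ^ 2) / area D := by
      field_simp
      ring
    rw [e] at h
    have := (le_div_iff₀ hA).1 h
    linarith

/-- Poincaré inequality on a bounded planar domain, with a constant depending only on its
area. -/
lemma l2sq_le_gradsq (hD : IsOpen D) (hDb : Bornology.IsBounded D)
    {u : ℝ × ℝ → ℝ} (hu : ContDiff ℝ 1 u) (h0 : ∀ p ∈ frontier D, u p = 0) :
    l2sq D u ≤ area D / 8 * gradsq D u := by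
  have hux := continuous_pdx hu
  have huy := continuous_pdy hu
  have hud : Differentiable ℝ u := hu.differentiable one_ne_zero
  have hix := (integrable_indicator_of_continuous hD hDb hux).abs
  have hiy := (integrable_indicator_of_continuous hD hDb huy).abs
  have hu2 : Continuous fun p => u p ^ 2 := hu.continuous.pow 2
  set A : ℝ → ℝ := fun y => ∫ x, |D.indicator (pdx u) (x, y)| with hA
  set B : ℝ → ℝ := fun x => ∫ y, |D.indicator (pdy u) (x, y)| with hB
  have hAi : Integrable A := hix.integral_prod_right
  have hBi : Integrable B := hiy.integral_prod_left
  have hAS : ∫ y, A y = ∫ p in D, |pdx u p| := by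
    rw [← integral_indicator hD.measurableSet, hA, ← integral_prod_symm _ hix]
    refine integral_congr_ae (Eventually.of_forall fun p => ?_)
    by_cases hp : p ∈ D <;> simp [hp]
  have hBS : ∫ x, B x = ∫ p in D, |pdy u p| := by
    rw [← integral_indicator hD.measurableSet, hB, ← integral_prod _ hiy]
    refine integral_congr_ae (Eventually.of_forall fun p => ?_)
    by_cases hp : p ∈ D <;> simp [hp]
  have hpt : ∀ p : ℝ × ℝ, D.indicator (fun p => u p ^ 2) p ≤ B p.1 * A p.2 / 4 := by
    rintro ⟨x, y⟩
    have hcy : Continuous fun x : ℝ => (x, y) := by fun_prop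
    have hcx : Continuous fun y : ℝ => (x, y) := by fun_prop
    have h1 : 2 * |D.indicator u (x, y)| ≤ A y :=
      two_mul_abs_indicator_le (hD.preimage hcy) (isBounded_slice_fst hDb y)
        (fun s => hasDerivAt_pdx hud s y) (hux.comp hcy)
        (fun s hs => h0 _ (hcy.frontier_preimage_subset D hs)) x
    have h2 : 2 * |D.indicator u (x, y)| ≤ B x :=
      two_mul_abs_indicator_le (hD.preimage hcx) (isBounded_slice_snd hDb x)
        (fun s => hasDerivAt_pdy hud x s) (huy.comp hcx)
        (fun s hs => h0 _ (hcx.frontier_preimage_subset D hs)) y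
    have h3 : D.indicator (fun p => u p ^ 2) (x, y) = |D.indicator u (x, y)| ^ 2 := by
      by_cases hp : (x, y) ∈ D <;> simp [hp]
    have h4 := mul_le_mul h2 h1 (by positivity) (le_trans (by positivity) h2)
    rw [h3]
    dsimp only
    linarith
  have hle : l2sq D u ≤ (∫ p in D, |pdy u p|) * (∫ p in D, |pdx u p|) / 4 := by
    rw [l2sq, ← integral_indicator hD.measurableSet, ← hAS, ← hBS, ← integral_prod_mul,
      ← integral_div]
    exact integral_mono (integrable_indicator_of_continuous hD hDb hu2)
      ((hBi.mul_prod hAi).div_const 4) hpt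
  have hsum : gradsq D u = (∫ p in D, pdx u p ^ 2) + ∫ p in D, pdy u p ^ 2 :=
    integral_add (integrableOn_of_continuous hDb (hux.pow 2))
      (integrableOn_of_continuous hDb (huy.pow 2))
  have hX := sq_setIntegral_abs_le hDb hux
  have hY := sq_setIntegral_abs_le hDb huy
  rw [hsum]
  nlinarith [sq_nonneg ((∫ p in D, |pdy u p|) - ∫ p in D, |pdx u p|)]

/-- Elliptic estimate for the Dirichlet problem `Δψ = q`. -/
lemma gradsq_le_l2sq_of_lap_eq (hD : IsOpen D) (hDb : Bornology.IsBounded D) {ψ q : ℝ × ℝ → ℝ}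
    (hψ : ContDiff ℝ (⊤ : ℕ∞) ψ) (hq : Continuous q) (hlap : ∀ p ∈ D, q p = lap ψ p)
    (h0 : ∀ p ∈ frontier D, ψ p = 0) {c : ℝ} (hc : 0 < c)
    (hP : l2sq D ψ ≤ c * gradsq D ψ) :
    gradsq D ψ ≤ c * l2sq D q := by
  have hG := setIntegral_mul_lap hD hDb hψ hψ h0
  simp only [← sq] at hG
  change _ = -gradsq D ψ at hG
  rw [← setIntegral_congr_fun (f := fun p => ψ p * q p) hD.measurableSet
    (fun p hp => by simp only [hlap p hp])] at hG
  have hψc := hψ.continuous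
  have hle : ∫ p in D, -(ψ p * q p) ≤ ∫ p in D, (1 / (2 * c) * ψ p ^ 2 + c / 2 * q p ^ 2) := by
    refine integral_mono (integrableOn_of_continuous hDb (by fun_prop))
      (integrableOn_of_continuous hDb (by fun_prop)) fun p => ?_
    have h : 1 / (2 * c) * ψ p ^ 2 + c / 2 * q p ^ 2 - -(ψ p * q p)
        = (ψ p + c * q p) ^ 2 / (2 * c) := by
      field_simp
      ring
    exact sub_nonneg.1 (h ▸ by positivity)
  rw [integral_neg, hG, neg_neg, integral_add (integrableOn_of_continuous hDb (by fun_prop))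
    (integrableOn_of_continuous hDb (by fun_prop)), integral_const_mul, integral_const_mul] at hle
  change _ ≤ 1 / (2 * c) * l2sq D ψ + c / 2 * l2sq D q at hle
  have h1 : 1 / (2 * c) * l2sq D ψ ≤ 1 / (2 * c) * (c * gradsq D ψ) := by gcongr
  have h2 : 1 / (2 * c) * (c * gradsq D ψ) = gradsq D ψ / 2 := by field_simp
  linarith

lemma SmoothField.contDiff {u : ℝ → ℝ × ℝ → ℝ} (hu : SmoothField u) (t : ℝ) :
    ContDiff ℝ (⊤ : ℕ∞) (u t) :=
  ContDiff.comp (g := Function.uncurry u) hu (contDiff_const.prodMk contDiff_id)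

lemma SmoothField.hasDerivAt {u : ℝ → ℝ × ℝ → ℝ} (hu : SmoothField u) (t : ℝ) (p : ℝ × ℝ) :
    HasDerivAt (fun s => u s p) (fderiv ℝ (Function.uncurry u) (t, p) (1, 0)) t :=
  HasFDerivAt.comp_hasDerivAt (f := fun s => (s, p)) t
    (ContDiff.differentiable hu (by simp) (t, p)).hasFDerivAt
    ((hasDerivAt_id t).prodMk (hasDerivAt_const t p))

/-- Differentiation of the squared norm under the integral sign. -/
lemma hasDerivAt_l2sq (hD : IsOpen D) (hDb : Bornology.IsBounded D) {q : ℝ → ℝ × ℝ → ℝ}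
    (hq : SmoothField q) (t : ℝ) :
    IntegrableOn (fun p => 2 * (q t p * deriv (fun s => q s p) t)) D ∧
    HasDerivAt (fun s => l2sq D (q s)) (∫ p in D, 2 * (q t p * deriv (fun s => q s p) t)) t := by
  have hqc : Continuous (Function.uncurry q) := ContDiff.continuous hq
  let G : ℝ × ℝ × ℝ → ℝ := fun z =>
    2 * (Function.uncurry q z * fderiv ℝ (Function.uncurry q) z (1, 0))
  have hG : Continuous G := continuous_const.mul
    (hqc.mul ((ContDiff.continuous_fderiv hq (by simp)).clm_apply continuous_const))
  obtain ⟨C, hC⟩ := ((isCompact_closedBall t 1).prod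
    hDb.isCompact_closure).exists_bound_of_continuousOn hG.continuousOn
  have hslice : ∀ s : ℝ, Continuous fun p : ℝ × ℝ => (s, p) := fun s =>
    continuous_const.prodMk continuous_id
  have hqi : ∀ s, IntegrableOn (fun p => q s p ^ 2) D := fun s =>
    integrableOn_of_continuous hDb ((hqc.comp (hslice s)).pow 2)
  simp only [fun p => (hq.hasDerivAt t p).deriv]
  refine hasDerivAt_integral_of_dominated_loc_of_deriv_le (F := fun s p => q s p ^ 2)
    (F' := fun s p => G (s, p)) (bound := fun _ => C) (μ := volume.restrict D)
    (Metric.closedBall_mem_nhds t one_pos)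
    (Eventually.of_forall fun s => (hqi s).aestronglyMeasurable) (hqi t)
    (integrableOn_of_continuous hDb (hG.comp (hslice t))).aestronglyMeasurable ?_
    (integrableOn_const hDb.measure_lt_top.ne) ?_
  · exact ae_restrict_of_forall_mem hD.measurableSet fun p hp s hs =>
      hC (s, p) ⟨hs, subset_closure hp⟩
  · refine Eventually.of_forall fun p s _ => ?_
    refine ((hq.hasDerivAt s p).pow 2).congr_deriv ?_
    simp [G, Function.uncurry, mul_assoc]

end Domain

/-- Young's inequality applied to the enstrophy production terms. -/
lemma enstrophy_production_le {r : ℝ} (hr : 0 < r) (β ν q qt J px py f L : ℝ)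
    (h : qt + J + β * px = f + ν * L - r * q + 0) :
    2 * (q * qt) ≤ 1 / r * f ^ 2 + (|β| - r) * q ^ 2 + |β| * (px ^ 2 + py ^ 2)
      + 2 * ν * (q * L) - 2 * (q * J) := by
  have hqt : qt = f + ν * L - r * q - J - β * px := by linarith
  have h1 : 2 * (q * f) ≤ 1 / r * f ^ 2 + r * q ^ 2 := by
    have e : 1 / r * f ^ 2 + r * q ^ 2 - 2 * (q * f) = (f - r * q) ^ 2 / r := by
      field_simp
      ring
    exact sub_nonneg.1 (e ▸ by positivity)
  have h2 : -(2 * β * (q * px)) ≤ |β| * (q ^ 2 + px ^ 2) := by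
    refine (neg_le_abs _).trans ?_
    have e : |2 * β * (q * px)| = |β| * (2 * |q| * |px|) := by
      simp only [abs_mul, abs_two]
      ring
    rw [e, ← sq_abs q, ← sq_abs px]
    gcongr
    exact two_mul_le_add_sq _ _
  have h3 : 0 ≤ |β| * py ^ 2 := by positivity
  rw [hqt]
  linarith


/-- enstrophy differential inequality.
If `q` is a (sufficiently smooth) solution of the barotropic vorticity equation
`q_t + J(ψ,q) + βψ_x = f + νΔq - rq`, `q = Δψ`, with zero boundary conditions
on `∂D`, then the enstrophy `‖q(t)‖²` satisfies
`d/dt ‖q(t)‖² ≤ -2α ‖q(t)‖² + (1/r) ‖f(t)‖²` for all `t ≥ 0`,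
where `α = r/2 + πν/|D| - (|β|/2)(|D|/π + 1)`. -/
theorem enstrophy_differential_inequality
    (D : Set (ℝ × ℝ)) (hD : IsOpen D) (hDb : Bornology.IsBounded D)
    (β ν r : ℝ) (hν : 0 < ν) (hr : 0 < r)
    (q ψ f : ℝ → ℝ × ℝ → ℝ)
    (hq : SmoothField q) (hψ : SmoothField ψ)
    (hf : MeanSquareIntegrable D f)
    (hdiff : ∀ t, 0 ≤ t → DifferentiableAt ℝ (fun s => l2sq D (q s)) t)
    (hsol : SolvesBVE D β ν r q ψ f (fun _ _ => 0)) :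
    ∀ t, 0 ≤ t →
      deriv (fun s => l2sq D (q s)) t ≤
        -2 * alphaConst D β ν r * l2sq D (q t) + (1 / r) * l2sq D (f t) := by
  intro t ht
  obtain ⟨hlap, hbd, heq⟩ := hsol
  rcases D.eq_empty_or_nonempty with rfl | hne
  · simp [l2sq]
  have hA : 0 < area D :=
    ENNReal.toReal_pos (hD.measure_pos volume hne).ne' hDb.measure_lt_top.ne
  have hc : 0 < area D / π := div_pos hA Real.pi_pos
  have poincare : ∀ u : ℝ × ℝ → ℝ, ContDiff ℝ (⊤ : ℕ∞) u → (∀ p ∈ frontier D, u p = 0) →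
      l2sq D u ≤ area D / π * gradsq D u := by
    intro u hu h0
    refine (l2sq_le_gradsq hD hDb (hu.of_le (by simp)) h0).trans ?_
    have hG : 0 ≤ gradsq D u := integral_nonneg fun p => by positivity
    gcongr
    linarith [Real.pi_le_four]
  have hqt := hq.contDiff t
  have hψt := hψ.contDiff t
  have hq0 : ∀ p ∈ frontier D, q t p = 0 := fun p hp => (hbd t ht p hp).1
  have hψ0 : ∀ p ∈ frontier D, ψ t p = 0 := fun p hp => (hbd t ht p hp).2
  have hPq := poincare _ hqt hq0
  have hGψ := gradsq_le_l2sq_of_lap_eq hD hDb hψt hqt.continuous (hlap t ht) hψ0 hc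
    (poincare _ hψt hψ0)
  have hgreen := setIntegral_mul_lap hD hDb hqt hqt hq0
  simp only [← sq] at hgreen
  change _ = -gradsq D (q t) at hgreen
  have hjac := setIntegral_mul_jac_eq_zero hD hDb hqt hψt hq0
  obtain ⟨hqi, hderiv⟩ := hasDerivAt_l2sq hD hDb hq t
  have hqc := hqt.continuous
  have hqx := (contDiff_pdx hqt).continuous
  have hqy := (contDiff_pdy hqt).continuous
  have hψx := (contDiff_pdx hψt).continuous
  have hψy := (contDiff_pdy hψt).continuous
  have hlapc : Continuous (lap (q t)) :=
    (contDiff_pdx (contDiff_pdx hqt)).continuous.add (contDiff_pdy (contDiff_pdy hqt)).continuous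
  have hjacc : Continuous (jac (ψ t) (q t)) := (hψx.mul hqy).sub (hψy.mul hqx)
  have i1 : IntegrableOn (fun p => 1 / r * f t p ^ 2) D := (hf.1 t ht).const_mul _
  have i2 : IntegrableOn (fun p => (|β| - r) * q t p ^ 2) D :=
    integrableOn_of_continuous hDb (by fun_prop)
  have i3 : IntegrableOn (fun p => |β| * (pdx (ψ t) p ^ 2 + pdy (ψ t) p ^ 2)) D :=
    integrableOn_of_continuous hDb (by fun_prop)
  have i4 : IntegrableOn (fun p => 2 * ν * (q t p * lap (q t) p)) D :=
    integrableOn_of_continuous hDb (by fun_prop)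
  have i5 : IntegrableOn (fun p => 2 * (q t p * jac (ψ t) (q t) p)) D :=
    integrableOn_of_continuous hDb (by fun_prop)
  have i12 : IntegrableOn (fun p => 1 / r * f t p ^ 2 + (|β| - r) * q t p ^ 2) D := i1.add i2
  have i123 : IntegrableOn (fun p => 1 / r * f t p ^ 2 + (|β| - r) * q t p ^ 2
      + |β| * (pdx (ψ t) p ^ 2 + pdy (ψ t) p ^ 2)) D := i12.add i3
  have i1234 : IntegrableOn (fun p => 1 / r * f t p ^ 2 + (|β| - r) * q t p ^ 2
      + |β| * (pdx (ψ t) p ^ 2 + pdy (ψ t) p ^ 2) + 2 * ν * (q t p * lap (q t) p)) D :=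
    i123.add i4
  have hmono := setIntegral_mono_on hqi (i1234.sub i5) hD.measurableSet fun p hp =>
    enstrophy_production_le hr β ν _ _ _ _ (pdy (ψ t) p) _ _ (heq t ht p hp)
  simp only [Pi.sub_apply] at hmono
  rw [integral_sub i1234 i5, integral_add i123 i4, integral_add i12 i3, integral_add i1 i2] at hmono
  simp only [integral_const_mul] at hmono
  rw [hgreen, hjac] at hmono
  change _ ≤ 1 / r * l2sq D (f t) + (|β| - r) * l2sq D (q t) + |β| * gradsq D (ψ t)
    + 2 * ν * -gradsq D (q t) - 2 * 0 at hmono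
  rw [hderiv.deriv, integral_const_mul]
  have hβ : |β| * gradsq D (ψ t) ≤ |β| * (area D / π * l2sq D (q t)) := by gcongr
  have hdiss : ν * (π / area D * l2sq D (q t)) ≤ ν * gradsq D (q t) := by
    gcongr
    rw [← inv_div, inv_mul_le_iff₀ hc]
    exact hPq
  refine hmono.trans ?_
  have e : -2 * alphaConst D β ν r * l2sq D (q t) = -r * l2sq D (q t)
      - 2 * (ν * (π / area D * l2sq D (q t))) + |β| * (area D / π * l2sq D (q t))
      + |β| * l2sq D (q t) := by
    rw [alphaConst]
    ring
  linarith
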